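/- Let Q be a quiver, P the path algebra of its double Q̄ over k, and L = P/[P,P] the necklace Lie coalgebra with cobracket δ_or. The k-linear map η_or : L → T_or(Φ_or) defined by η_or([a₁⋯aₙ]) = Σ_{cuts H of [a₁⋯aₙ]} (T_{H,or}, s_{H,or}) is an injective homomorphism of Lie coalgebras from (L, δ_or) to (T_or(Φ_or), ρ^ss_O). -/

import Mathlib

/-!
Statement 11: for a quiver `Q`, the map
`η_or([a₁⋯aₙ]) = Σ_{cuts H} (T_{H,or}, s_{H,or})` (where `(T_{H,or}, s_{H,or})` is the
dual decorated oriented tree of the chord diagram of the cut `H`) is an injective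
homomorphism of Lie coalgebras from the necklace Lie coalgebra `(L, δ_or)` to
`(T_or(Φ_or), ρ^ss_O)`.
-/

open TensorProduct

noncomputable section

/-! ### Quivers, double quivers and paths

A quiver `Q` is given by a vertex type `I`, an arrow type `E`, and source/target maps
`s t : E → I`. -/

/-- The arrows of the double quiver `Q̄ = Q ⊔ Q*`: `.inl e = e` and `.inr e = e*`. -/
abbrev Arr (E : Type*) := E ⊕ E

/-- The involution `a ↦ a*` on arrows of the double quiver (with `(e*)* = e`). -/
def astar {E : Type*} : Arr E → Arr E
  | .inl e => .inr e
  | .inr e => .inl e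

/-- The source `a_s` of an arrow of the double quiver. -/
def asrc {I E : Type*} (s t : E → I) : Arr E → I
  | .inl e => s e
  | .inr e => t e

/-- The target `a_t` of an arrow of the double quiver. -/
def atgt {I E : Type*} (s t : E → I) : Arr E → I
  | .inl e => t e
  | .inr e => s e

open scoped Classical in
/-- The pairing `ω`: `ω(e,e*) = 1`, `ω(e*,e) = −1` for `e ∈ Q`, and `ω(a,b) = 0`
whenever `b ≠ a*`. -/
def omg (k : Type*) [CommRing k] {E : Type*} : Arr E → Arr E → k
  | .inl e, .inr e' => if e = e' then 1 else 0
  | .inr e, .inl e' => if e = e' then -1 else 0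
  | _, _ => 0

/-- `IsPathFrom s t v l`: `l` is a composable sequence of arrows starting at `v`. -/
def IsPathFrom {I E : Type*} (s t : E → I) : I → List (Arr E) → Prop
  | _, [] => True
  | v, a :: l => asrc s t a = v ∧ IsPathFrom s t (atgt s t a) l

/-- The target of a path. -/
def pathTgt {I E : Type*} (s t : E → I) : I → List (Arr E) → I
  | v, [] => v
  | _, a :: l => pathTgt s t (atgt s t a) l

/-- A path in the double quiver `Q̄`. -/
structure QPath {I E : Type*} (s t : E → I) : Type _ where
  src : I
  arrows : List (Arr E)
  valid : IsPathFrom s t src arrows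

/-! ### Cuts of paths -/

/-- A cut of a path with arrow list `l` (0-indexed): a set `H` of pairs `(i,j)` of
positions such that all the involved positions are distinct, `i < j` for each pair, the
pairs do not cross, and for each pair `{a_i, a_j} = {e, e*}` for some arrow `e ∈ Q`. -/
def IsCut {E : Type*} (l : List (Arr E)) (H : Finset (ℕ × ℕ)) : Prop :=
  (∀ c ∈ H, c.1 < c.2 ∧ c.2 < l.length ∧
    ∃ e : E, (l[c.1]? = some (.inl e) ∧ l[c.2]? = some (.inr e)) ∨
             (l[c.1]? = some (.inr e) ∧ l[c.2]? = some (.inl e))) ∧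
  (∀ c ∈ H, ∀ c' ∈ H, c ≠ c' →
    c.1 ≠ c'.1 ∧ c.1 ≠ c'.2 ∧ c.2 ≠ c'.1 ∧ c.2 ≠ c'.2) ∧
  ¬ ∃ c ∈ H, ∃ c' ∈ H, c.1 < c'.1 ∧ c'.1 < c.2 ∧ c.2 < c'.2

/-- No pair of a cut is nested inside another: together with `IsCut` this defines
simple cuts of paths. -/
def NoNest (H : Finset (ℕ × ℕ)) : Prop :=
  ¬ ∃ c ∈ H, ∃ c' ∈ H, c.1 < c'.1 ∧ c'.2 < c.2

/-- A simple cut of a path: a cut in which no pair is nested inside another. -/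
def IsSimpleCut {E : Type*} (l : List (Arr E)) (H : Finset (ℕ × ℕ)) : Prop :=
  IsCut l H ∧ NoNest H

/-- The sign `ε` contributed by one pair of a cut: `−ω(a_i, a_j)`. -/
def epsFactor (k : Type*) [CommRing k] {E : Type*} (l : List (Arr E)) (c : ℕ × ℕ) : k :=
  match l[c.1]?, l[c.2]? with
  | some a, some b => -(omg k a b)
  | _, _ => 0

/-- The sign `ε_H = ∏_ℓ (−ω(a_{i_ℓ}, a_{j_ℓ}))` of a cut. -/
def epsH (k : Type*) [CommRing k] {E : Type*} (l : List (Arr E)) (H : Finset (ℕ × ℕ)) :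
    k := ∏ c ∈ H, epsFactor k l c

/-- The chords of `H` lying strictly inside the chord `(i,j)`, reindexed along the path
`a_{i+1} ⋯ a_{j−1}`. -/
def insideCut (H : Finset (ℕ × ℕ)) (i j : ℕ) : Finset (ℕ × ℕ) :=
  (H.filter (fun c' => i < c'.1 ∧ c'.2 < j)).image
    (fun c' => (c'.1 - (i+1), c'.2 - (i+1)))

/-- The chords of `H` other than `(i,j)` not lying inside the chord `(i,j)`, reindexed
along the path `a₁ ⋯ a_{i−1} a_{j+1} ⋯ a_n`. -/
def outsideCut (H : Finset (ℕ × ℕ)) (i j : ℕ) : Finset (ℕ × ℕ) :=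
  ((H.erase (i, j)).filter (fun c' => ¬ (i < c'.1 ∧ c'.2 < j))).image
    (fun c' => (if j < c'.1 then c'.1 - (j - i + 1) else c'.1,
                if j < c'.2 then c'.2 - (j - i + 1) else c'.2))

/-- A closed path in the double quiver. -/
structure ClosedQPath {I E : Type*} (s t : E → I) : Type _ where
  path : QPath s t
  closed : pathTgt s t path.src path.arrows = path.src

/-- Rotation of closed paths (moving the initial edge): the equivalence closure of this
relation identifies exactly the closed paths giving the same cyclic path (necklace). -/
def RotRel {I E : Type*} (s t : E → I) (p q : ClosedQPath s t) : Prop :=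
  ∃ (a : Arr E) (l : List (Arr E)),
    p.path.arrows = a :: l ∧ q.path.arrows = l ++ [a] ∧ q.path.src = atgt s t a

/-- Necklaces: cyclic paths in the double quiver, i.e. closed paths up to rotation. -/
def Necklace {I E : Type*} (s t : E → I) : Type _ := Quot (RotRel s t)

open scoped Classical in
/-- The necklace with basepoint `v` and arrows `l`, or the trivial necklace at `v` if
the data is not a closed path. -/
def mkNk {I E : Type*} (s t : E → I) (v : I) (l : List (Arr E)) : Necklace s t :=
  if h : IsPathFrom s t v l ∧ pathTgt s t v l = v then
    Quot.mk (RotRel s t) ⟨⟨v, l, h.1⟩, h.2⟩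
  else Quot.mk (RotRel s t) ⟨⟨v, [], trivial⟩, rfl⟩

/-! ### Decorated oriented trees: the oriented tree-structure `Φ_or`

`Φ_or` attaches to an oriented tree a ribbon graph structure and a labeling of every
vertex by a cyclic path (necklace) in `Q̄`.  A pair `(T,s)` is represented by a planar
rooted tree whose vertices carry necklace labels and whose edges carry their orientation
flag (`true` = oriented from parent to child); the auxiliary root, the corner at the
root, and the planar representation of the cyclic orders are forgotten by passing to the
quotient `ODT` below. -/

/-- Planar rooted representations of oriented trees decorated by `Φ_or`. -/
inductive ODTree {I E : Type*} (s t : E → I) : Type _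
  | node : Necklace s t → List (Bool × ODTree s t) → ODTree s t

/-- Generating relation identifying representations of the same decorated oriented
tree: rotating the (cyclic) order of the edges at the root, and moving the root along an
edge.  Its equivalence closure identifies exactly the representations with isomorphic
underlying decorated oriented trees. -/
inductive ODTree.Rel {I E : Type*} {s t : E → I} : ODTree s t → ODTree s t → Prop
  | rot {x : Necklace s t} {c : Bool × ODTree s t} {cs : List (Bool × ODTree s t)} :
      ODTree.Rel (.node x (c :: cs)) (.node x (cs ++ [c]))
  | reroot {x y : Necklace s t} {b : Bool} {ls ts : List (Bool × ODTree s t)} :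
      ODTree.Rel (.node x ((b, .node y ls) :: ts)) (.node y (ls ++ [(!b, .node x ts)]))

/-- `T_or(Φ_or)`-basis: isomorphism classes of pairs `(T,s)` with `T` an oriented tree
and `s ∈ Φ_or(T)`. -/
def ODT {I E : Type*} (s t : E → I) : Type _ := Quot (@ODTree.Rel I E s t)

section ODTreeOps

variable {I E : Type*} {s t : E → I}

mutual
/-- All one-edge cuts of a decorated oriented tree: for each edge `e`, the triple
`(b, A, B)` where `b` is the orientation flag of `e` (`true` iff `e` points away from
the root side), `A` is the component away from the root and `B` the component containing
the root, with restricted decorations. -/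
def ODTree.cuts : ODTree s t → List (Bool × ODTree s t × ODTree s t)
  | .node x l => (ODTree.cutsL l).map (fun p => (p.1, p.2.1, .node x p.2.2))
/-- Auxiliary to `ODTree.cuts`. -/
def ODTree.cutsL : List (Bool × ODTree s t) →
    List (Bool × ODTree s t × List (Bool × ODTree s t))
  | [] => []
  | (b, u) :: ts =>
      ((b, u, ts) :: (ODTree.cuts u).map (fun p => (p.1, p.2.1, (b, p.2.2) :: ts)))
        ++ (ODTree.cutsL ts).map (fun p => (p.1, p.2.1, (b, u) :: p.2.2))
end

end ODTreeOps

open scoped Classical in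
/-- The dual decorated oriented tree of the chord diagram of a cut `H` of a necklace
(presented by a closed path with arrow list `l`), built recursively face by face, with
necklace labels; cf. `buildT`. -/
def buildOT {I E : Type*} (s t : E → I) (l : List (Arr E)) :
    ℕ → List (ℕ × ℕ) → ℕ → ℕ → I → ODTree s t
  | 0, _, _, _, v => .node (mkNk s t v []) []
  | fuel+1, H, lo, hi, v =>
      let outer : List (ℕ × ℕ) := (List.range l.length).filterMap (fun i =>
        match H.find? (fun c => c.1 == i) with
        | some c => if lo ≤ c.1 ∧ c.2 < hi ∧
            ¬ (H.any (fun c' =>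
              decide (c' ≠ c ∧ lo ≤ c'.1 ∧ c'.1 < c.1 ∧ c.2 < c'.2 ∧ c'.2 < hi)))
            then some c else none
        | none => none)
      let lbl : List (Arr E) := (List.range l.length).filterMap (fun m =>
        if lo ≤ m ∧ m < hi ∧ ¬ outer.any (fun c => decide (c.1 ≤ m ∧ m ≤ c.2))
        then l[m]? else none)
      .node (mkNk s t v lbl)
        (outer.map (fun c =>
          ((match l[c.1]? with | some (.inl _) => true | _ => false),
           buildOT s t l fuel
             (H.filter (fun c' => decide (c.1 < c'.1 ∧ c'.2 < c.2)))
             (c.1+1) c.2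
             (match l[c.1]? with | some a => atgt s t a | none => v))))

open scoped Classical

/-- The sum of a list of elements of an additive commutative monoid. -/
def lsum {M : Type*} [AddCommMonoid M] (l : List M) : M := l.foldr (· + ·) 0

/-- The finset of all cuts of the list of arrows `l`. -/
def allCuts {E : Type*} (l : List (Arr E)) : Finset (Finset (ℕ × ℕ)) :=
  ((Finset.range l.length ×ˢ Finset.range l.length).powerset).filter
    (fun H => IsCut l H)

variable (k : Type*) [CommRing k] {I E : Type*} (s t : E → I)

/-- `L = P/[P,P]`: the free `k`-module with basis the necklaces in `Q̄`. -/
abbrev NeckMod := Necklace s t →₀ k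

/-- `T_or(Φ_or)`: the free `k`-module on the isomorphism classes of pairs `(T,s)` with
`T` an oriented tree and `s ∈ Φ_or(T)`. -/
abbrev ODMod := ODT s t →₀ k

/-- The basis vector of a necklace, or `0` if the data is not a closed path. -/
def mkN (v : I) (l : List (Arr E)) : NeckMod k s t :=
  if h : IsPathFrom s t v l ∧ pathTgt s t v l = v then
    Finsupp.single (Quot.mk (RotRel s t) ⟨⟨v, l, h.1⟩, h.2⟩) (1 : k) else 0

/-- The summand of `δ_or` for a pair of positions `i < j` of the cyclic path `(v, l)`. -/
def dorTerm (v : I) (l : List (Arr E)) (i j : ℕ) :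
    NeckMod k s t ⊗[k] NeckMod k s t :=
  match l[i]?, l[j]? with
  | some a, some b =>
      let inner := mkN k s t (atgt s t a) ((l.drop (i+1)).take (j - i - 1))
      let outer := mkN k s t (atgt s t b) (l.drop (j+1) ++ l.take i)
      omg k a b • (outer ⊗ₜ[k] inner - inner ⊗ₜ[k] outer)
  | _, _ => (0 : k) • (mkN k s t v [] ⊗ₜ[k] mkN k s t v [])

/-- The necklace Lie cobracket `δ_or` on `L`. -/
def deltaOr : NeckMod k s t →ₗ[k] NeckMod k s t ⊗[k] NeckMod k s t :=
  Finsupp.lift (NeckMod k s t ⊗[k] NeckMod k s t) k (Necklace s t) fun q =>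
    let p := q.out
    ∑ i ∈ Finset.range p.path.arrows.length, ∑ j ∈ Finset.range p.path.arrows.length,
      if i < j then dorTerm k s t p.path.src p.path.arrows i j
      else (0 : k) • dorTerm k s t p.path.src p.path.arrows i j

/-- The Lie cobracket
`ρ^ss_O((T,s)) = Σ_{e∈E(T)} ((T_e^1,s|) ⊗ (T_e^2,s|) − (T_e^2,s|) ⊗ (T_e^1,s|))` on
`T_or(Φ_or)`, `T_e^2` being the component `e` points to (computed on a representative;
the result does not depend on the choice). -/
def rhoOD : ODMod k s t →ₗ[k] ODMod k s t ⊗[k] ODMod k s t :=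
  Finsupp.lift (ODMod k s t ⊗[k] ODMod k s t) k (ODT s t) fun q =>
    lsum ((ODTree.cuts q.out).map fun p =>
      let xA : ODMod k s t := Finsupp.single (Quot.mk ODTree.Rel p.2.1) (1 : k)
      let xB : ODMod k s t := Finsupp.single (Quot.mk ODTree.Rel p.2.2) (1 : k)
      let x1 : ODMod k s t := if p.1 then xB else xA
      let x2 : ODMod k s t := if p.1 then xA else xB
      x1 ⊗ₜ[k] x2 - x2 ⊗ₜ[k] x1)

/-- `η_or([a₁⋯aₙ]) = Σ_{cuts H} (T_{H,or}, s_{H,or})` (computed on a representative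
closed path; the result does not depend on the choice). -/
def etaOr : NeckMod k s t →ₗ[k] ODMod k s t :=
  Finsupp.lift (ODMod k s t) k (Necklace s t) fun q =>
    let p := q.out
    ∑ H ∈ allCuts p.path.arrows,
      Finsupp.single
        (Quot.mk ODTree.Rel
          (buildOT s t p.path.arrows (p.path.arrows.length + 1) H.toList 0
            p.path.arrows.length p.path.src)) (1 : k)

/-! ### Noncrossing forests -/

/-- A word in the arrows of the double quiver together with a cut of it: `arr a F` starts with an
arrow `a` incident to no chord, and `chord a G F` starts with a chord joining `a` to an arrow `a*`,
with `G` below the chord and `F` after it. -/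
inductive NCForest (E : Type*) : Type _
  | nil : NCForest E
  | arr : Arr E → NCForest E → NCForest E
  | chord : Arr E → NCForest E → NCForest E → NCForest E

section AstarLemmas

variable {I E : Type*}

@[simp] lemma astar_astar (a : Arr E) : astar (astar a) = a := by cases a <;> rfl

@[simp] lemma asrc_astar (s t : E → I) (a : Arr E) : asrc s t (astar a) = atgt s t a := by
  cases a <;> rfl

@[simp] lemma atgt_astar (s t : E → I) (a : Arr E) : atgt s t (astar a) = asrc s t a := by
  cases a <;> rfl

@[simp] lemma isLeft_astar (a : Arr E) : (astar a).isLeft = !a.isLeft := by cases a <;> rfl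

lemma isPathFrom_append (s t : E → I) (v : I) (l m : List (Arr E)) :
    IsPathFrom s t v (l ++ m) ↔ IsPathFrom s t v l ∧ IsPathFrom s t (pathTgt s t v l) m := by
  induction l generalizing v with
  | nil => simp [IsPathFrom, pathTgt]
  | cons a l ih => simp [IsPathFrom, pathTgt, ih, and_assoc]

lemma pathTgt_append (s t : E → I) (v : I) (l m : List (Arr E)) :
    pathTgt s t v (l ++ m) = pathTgt s t (pathTgt s t v l) m := by
  induction l generalizing v with
  | nil => rfl
  | cons a l ih => simp [pathTgt, ih]

lemma exists_eq_astar_iff {o o' : Option (Arr E)} :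
    (∃ e : E, (o = some (.inl e) ∧ o' = some (.inr e)) ∨
      (o = some (.inr e) ∧ o' = some (.inl e))) ↔
      ∃ a : Arr E, o = some a ∧ o' = some (astar a) := by
  constructor
  · rintro ⟨e, ⟨h, h'⟩ | ⟨h, h'⟩⟩
    · exact ⟨.inl e, h, h'⟩
    · exact ⟨.inr e, h, h'⟩
  · rintro ⟨a | a, h, h'⟩
    · exact ⟨a, .inl ⟨h, h'⟩⟩
    · exact ⟨a, .inr ⟨h, h'⟩⟩

end AstarLemmas

namespace NCForest

variable {I E : Type*}

/-- The underlying word. -/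
def word : NCForest E → List (Arr E)
  | nil => []
  | arr a F => a :: word F
  | chord a G F => a :: (word G ++ astar a :: word F)

/-- The arrows lying in the outer face. -/
def outerWord : NCForest E → List (Arr E)
  | nil => []
  | arr a F => a :: outerWord F
  | chord _ _ F => outerWord F

/-- Concatenation. -/
def append : NCForest E → NCForest E → NCForest E
  | nil, K => K
  | arr a F, K => arr a (append F K)
  | chord a G F, K => chord a G (append F K)

/-- The chords, as pairs of positions, the word being placed at position `lo`. -/
def chords : ℕ → NCForest E → Finset (ℕ × ℕ)
  | _, nil => ∅
  | lo, arr _ F => chords (lo + 1) F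
  | lo, chord _ G F =>
      insert (lo, lo + 1 + G.word.length)
        (chords (lo + 1) G ∪ chords (lo + 2 + G.word.length) F)

/-- The outermost chords, from left to right, with their first arrow and the forest below. -/
def tops : ℕ → NCForest E → List ((ℕ × ℕ) × Arr E × NCForest E)
  | _, nil => []
  | lo, arr _ F => tops (lo + 1) F
  | lo, chord a G F =>
      ((lo, lo + 1 + G.word.length), a, G) :: tops (lo + 2 + G.word.length) F

/-- The positions of the arrows lying in the outer face. -/
def outerIdx : ℕ → NCForest E → List ℕ
  | _, nil => []
  | lo, arr _ F => lo :: outerIdx (lo + 1) F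
  | lo, chord _ G F => outerIdx (lo + 2 + G.word.length) F

lemma chords_bounds (F : NCForest E) (lo : ℕ) {c : ℕ × ℕ} (hc : c ∈ chords lo F) :
    lo ≤ c.1 ∧ c.1 < c.2 ∧ c.2 < lo + F.word.length := by
  induction F generalizing lo with
  | nil => simp [chords] at hc
  | arr a F ih =>
    have := ih _ hc
    simp [word]; omega
  | chord a G F ihG ihF =>
    simp only [chords, Finset.mem_insert, Finset.mem_union] at hc
    simp only [word, List.length_cons, List.length_append]
    rcases hc with rfl | hc | hc
    · simp; omega
    · have := ihG _ hc; omega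
    · have := ihF _ hc; omega

lemma chords_letters (F : NCForest E) (pre post : List (Arr E)) {c : ℕ × ℕ}
    (hc : c ∈ chords pre.length F) :
    ∃ a, (pre ++ F.word ++ post)[c.1]? = some a ∧
      (pre ++ F.word ++ post)[c.2]? = some (astar a) := by
  induction F generalizing pre post with
  | nil => simp [chords] at hc
  | arr a F ih => simpa [word] using ih (pre ++ [a]) post (by simpa [chords] using hc)
  | chord a G F ihG ihF =>
    simp only [chords, Finset.mem_insert, Finset.mem_union] at hc
    rcases hc with rfl | hc | hc
    · refine ⟨a, by simp [word], ?_⟩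
      simp only [word, List.append_assoc, List.cons_append]
      rw [List.getElem?_append_right (by omega),
        show pre.length + 1 + G.word.length - pre.length = G.word.length + 1 by omega]
      simp
    · simpa [word] using ihG (pre ++ [a]) (astar a :: (F.word ++ post)) (by simpa using hc)
    · simpa [word] using ihF (pre ++ a :: (G.word ++ [astar a])) post (by
        convert hc using 2; simp; omega)

lemma chords_disjoint (F : NCForest E) (lo : ℕ) {c c' : ℕ × ℕ} (hc : c ∈ chords lo F)
    (hc' : c' ∈ chords lo F) (hne : c ≠ c') :
    (c.1 ≠ c'.1 ∧ c.1 ≠ c'.2 ∧ c.2 ≠ c'.1 ∧ c.2 ≠ c'.2) ∧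
      ¬ (c.1 < c'.1 ∧ c'.1 < c.2 ∧ c.2 < c'.2) := by
  induction F generalizing lo with
  | nil => simp [chords] at hc
  | arr a F ih => exact ih _ hc hc'
  | chord a G F ihG ihF =>
    simp only [chords, Finset.mem_insert, Finset.mem_union] at hc hc'
    rcases hc with rfl | hc | hc <;> rcases hc' with rfl | hc' | hc'
    · exact absurd rfl hne
    · have := chords_bounds _ _ hc'; simp only; omega
    · have := chords_bounds _ _ hc'; simp only; omega
    · have := chords_bounds _ _ hc; simp only; omega
    · exact ihG _ hc hc'
    · have := chords_bounds _ _ hc; have := chords_bounds _ _ hc'; omega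
    · have := chords_bounds _ _ hc; simp only; omega
    · have := chords_bounds _ _ hc; have := chords_bounds _ _ hc'; omega
    · exact ihF _ hc hc'

lemma isCut_chords (F : NCForest E) : IsCut F.word (chords 0 F) := by
  refine ⟨fun c hc => ?_, fun c hc c' hc' h => (chords_disjoint F 0 hc hc' h).1, ?_⟩
  · have := chords_bounds F 0 hc
    refine ⟨this.2.1, by omega, exists_eq_astar_iff.2 ?_⟩
    simpa using chords_letters F [] [] hc
  · rintro ⟨c, hc, c', hc', h⟩
    exact (chords_disjoint F 0 hc hc' (by rintro rfl; omega)).2 h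

lemma chords_injective {F F' : NCForest E} {lo : ℕ} (hw : F.word = F'.word)
    (hc : chords lo F = chords lo F') : F = F' := by
  have key : ∀ (a : Arr E) (F G K : NCForest E) (lo : ℕ),
      chords lo (arr a F) ≠ chords lo (chord a G K) := by
    intro a F G K lo h
    have : (lo, lo + 1 + G.word.length) ∈ chords lo (arr a F) := by rw [h]; simp [chords]
    have := chords_bounds F (lo + 1) this
    simp at this
  induction F generalizing F' lo with
  | nil => cases F' <;> simp [word] at hw ⊢
  | arr a F ih =>
    cases F' with
    | nil => simp [word] at hw
    | arr b F' =>
      simp only [word, List.cons.injEq] at hw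
      rw [hw.1, ih hw.2 hc]
    | chord b G K =>
      simp only [word, List.cons.injEq] at hw
      obtain ⟨rfl, -⟩ := hw
      exact absurd hc (key _ _ _ _ _)
  | chord a G F ihG ihF =>
    cases F' with
    | nil => simp [word] at hw
    | arr b F' =>
      simp only [word, List.cons.injEq] at hw
      obtain ⟨rfl, -⟩ := hw
      exact absurd hc.symm (key _ _ _ _ _)
    | chord b G' F' =>
      simp only [word, List.cons.injEq] at hw
      obtain ⟨rfl, hw⟩ := hw
      have hlen : G.word.length = G'.word.length := by
        have : (lo, lo + 1 + G.word.length) ∈ chords lo (chord a G' F') := by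
          rw [← hc]; simp [chords]
        simp only [chords, Finset.mem_insert, Finset.mem_union] at this
        rcases this with h | h | h
        · simp at h; omega
        · have := chords_bounds _ _ h; simp at this
        · have := chords_bounds _ _ h; simp at this; omega
      obtain ⟨hG, hF⟩ := List.append_inj hw hlen
      have hF : F.word = F'.word := by simpa using hF
      have hlF := congrArg List.length hF
      have hmem : ∀ c, c ∈ chords lo (chord a G F) ↔ c ∈ chords lo (chord a G' F') := by
        rw [hc]; simp
      simp only [chords, Finset.mem_insert, Finset.mem_union, ← hlen] at hmem
      have h1 : chords (lo + 1) G = chords (lo + 1) G' := by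
        ext c
        constructor <;> intro h <;> have hb := chords_bounds _ _ h
        · rcases (hmem c).1 (.inr (.inl h)) with rfl | h' | h'
          · simp at hb
          · exact h'
          · have := chords_bounds _ _ h'; omega
        · rcases (hmem c).2 (.inr (.inl h)) with rfl | h' | h'
          · simp at hb
          · exact h'
          · have := chords_bounds _ _ h'; omega
      have h2 : chords (lo + 2 + G.word.length) F = chords (lo + 2 + G.word.length) F' := by
        ext c
        constructor <;> intro h <;> have hb := chords_bounds _ _ h
        · rcases (hmem c).1 (.inr (.inr h)) with rfl | h' | h'
          · simp at hb; omega
          · have := chords_bounds _ _ h'; omega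
          · exact h'
        · rcases (hmem c).2 (.inr (.inr h)) with rfl | h' | h'
          · simp at hb; omega
          · have := chords_bounds _ _ h'; omega
          · exact h'
      rw [ihG hG h1, ihF hF h2]

lemma exists_chords_eq (n : ℕ) : ∀ (l : List (Arr E)) (lo : ℕ) (H : Finset (ℕ × ℕ)),
    l.length ≤ n →
    (∀ c ∈ H, lo ≤ c.1 ∧ c.1 < c.2 ∧ c.2 < lo + l.length ∧
      ∃ a, l[c.1 - lo]? = some a ∧ l[c.2 - lo]? = some (astar a)) →
    (∀ c ∈ H, ∀ c' ∈ H, c ≠ c' → c.1 ≠ c'.1 ∧ c.1 ≠ c'.2 ∧ c.2 ≠ c'.1 ∧ c.2 ≠ c'.2) →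
    (∀ c ∈ H, ∀ c' ∈ H, ¬ (c.1 < c'.1 ∧ c'.1 < c.2 ∧ c.2 < c'.2)) →
    ∃ F : NCForest E, F.word = l ∧ chords lo F = H := by
  induction n with
  | zero =>
    intro l lo H hl h1 _ _
    obtain rfl : l = [] := by simpa using hl
    refine ⟨nil, rfl, (Finset.eq_empty_of_forall_notMem fun c hc => ?_).symm⟩
    have := h1 c hc
    simp at this
  | succ n ih =>
    intro l lo H hl h1 h2 h3
    rcases l with _ | ⟨a, l⟩
    · exact ih [] lo H (by simp) h1 h2 h3
    by_cases h0 : ∃ j, (lo, j) ∈ H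
    · obtain ⟨j, hj⟩ := h0
      obtain ⟨-, hlj, hjl, b, hb, hjb⟩ := h1 _ hj
      simp only [List.length_cons, tsub_self, List.getElem?_cons_zero, Option.some.injEq]
        at hlj hjl hb hjb hl
      subst hb
      obtain ⟨d, rfl⟩ : ∃ d, j = lo + 1 + d := ⟨j - (lo + 1), by omega⟩
      rw [show lo + 1 + d - lo = d + 1 by omega, List.getElem?_cons_succ] at hjb
      have hd : d < l.length := by omega
      have hsplit : l = l.take d ++ astar a :: l.drop (d + 1) := by
        rw [List.getElem?_eq_getElem hd, Option.some.injEq] at hjb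
        rw [← hjb, List.getElem_cons_drop, List.take_append_drop]
      have htl : (l.take d).length = d := by simp; omega
      obtain ⟨G, hGw, hGc⟩ := ih (l.take d) (lo + 1)
        (H.filter fun c => lo < c.1 ∧ c.2 < lo + 1 + d) (by omega)
        (by
          intro c hc
          simp only [Finset.mem_filter] at hc
          obtain ⟨hc, hc1, hc2⟩ := hc
          obtain ⟨-, hlt, -, b, hb, hb'⟩ := h1 c hc
          refine ⟨by omega, hlt, by omega, b, ?_, ?_⟩
          · rw [List.getElem?_take_of_lt (by omega), ← hb,
              show c.1 - lo = c.1 - (lo + 1) + 1 by omega, List.getElem?_cons_succ]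
          · rw [List.getElem?_take_of_lt (by omega), ← hb',
              show c.2 - lo = c.2 - (lo + 1) + 1 by omega, List.getElem?_cons_succ])
        (fun c hc c' hc' => h2 c (Finset.mem_filter.1 hc).1 c' (Finset.mem_filter.1 hc').1)
        (fun c hc c' hc' => h3 c (Finset.mem_filter.1 hc).1 c' (Finset.mem_filter.1 hc').1)
      obtain ⟨F, hFw, hFc⟩ := ih (l.drop (d + 1)) (lo + 2 + d)
        (H.filter fun c => lo + 1 + d < c.1) (by simp; omega)
        (by
          intro c hc
          simp only [Finset.mem_filter] at hc
          obtain ⟨hc, hc1⟩ := hc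
          obtain ⟨-, hlt, hlt', b, hb, hb'⟩ := h1 c hc
          simp only [List.length_cons] at hlt'
          refine ⟨by omega, hlt, by simp; omega, b, ?_, ?_⟩
          · rw [List.getElem?_drop, ← hb,
              show c.1 - lo = d + 1 + (c.1 - (lo + 2 + d)) + 1 by omega, List.getElem?_cons_succ]
          · rw [List.getElem?_drop, ← hb',
              show c.2 - lo = d + 1 + (c.2 - (lo + 2 + d)) + 1 by omega, List.getElem?_cons_succ])
        (fun c hc c' hc' => h2 c (Finset.mem_filter.1 hc).1 c' (Finset.mem_filter.1 hc').1)
        (fun c hc c' hc' => h3 c (Finset.mem_filter.1 hc).1 c' (Finset.mem_filter.1 hc').1)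
      refine ⟨chord a G F, by rw [word, hGw, hFw, ← hsplit], ?_⟩
      ext c
      simp only [chords, hGw, htl, hGc, hFc, Finset.mem_insert, Finset.mem_union,
        Finset.mem_filter]
      constructor
      · rintro (rfl | h | h)
        exacts [hj, h.1, h.1]
      · intro hc
        by_cases hce : c = (lo, lo + 1 + d)
        · exact .inl hce
        have e1 := h1 c hc
        have e2 := h2 c hc _ hj hce
        have e3 := h3 _ hj c hc
        simp only at e1 e2 e3
        rcases lt_or_gt_of_ne e2.2.1 with h | h
        · exact .inr (.inl ⟨hc, by omega, by omega⟩)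
        · exact .inr (.inr ⟨hc, h⟩)
    · push Not at h0
      obtain ⟨F, hFw, hFc⟩ := ih l (lo + 1) H (by simpa using hl) (by
        intro c hc
        obtain ⟨hle, hlt, hlt', b, hb, hb'⟩ := h1 c hc
        simp only [List.length_cons] at hlt'
        have hne : c.1 ≠ lo := fun h => h0 c.2 (h ▸ hc)
        refine ⟨by omega, hlt, by omega, b, ?_, ?_⟩
        · rw [← hb, show c.1 - lo = c.1 - (lo + 1) + 1 by omega, List.getElem?_cons_succ]
        · rw [← hb', show c.2 - lo = c.2 - (lo + 1) + 1 by omega, List.getElem?_cons_succ])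
        h2 h3
      exact ⟨arr a F, by rw [word, hFw], hFc⟩

lemma exists_of_isCut {l : List (Arr E)} {H : Finset (ℕ × ℕ)} (h : IsCut l H) :
    ∃ F : NCForest E, F.word = l ∧ chords 0 F = H := by
  obtain ⟨h1, h2, h3⟩ := h
  refine exists_chords_eq l.length l 0 H le_rfl (fun c hc => ?_) h2
    fun c hc c' hc' h => h3 ⟨c, hc, c', hc', h⟩
  obtain ⟨hlt, hlt', he⟩ := h1 c hc
  exact ⟨by omega, hlt, by omega, exists_eq_astar_iff.1 he⟩

lemma mem_allCuts {l : List (Arr E)} {H : Finset (ℕ × ℕ)} : H ∈ allCuts l ↔ IsCut l H := by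
  simp only [allCuts, Finset.mem_filter, Finset.mem_powerset, and_iff_right_iff_imp]
  intro h c hc
  have := h.1 c hc
  simp only [Finset.mem_product, Finset.mem_range]
  omega

lemma finite_word_eq (l : List (Arr E)) : {F : NCForest E | F.word = l}.Finite := by
  refine Set.Finite.of_injOn (f := chords 0) (t := ↑(allCuts l)) ?_ ?_ (Finset.finite_toSet _)
  · rintro F rfl
    exact mem_allCuts.2 (isCut_chords F)
  · rintro F rfl F' hF' h
    exact chords_injective (Eq.symm hF') h

/-- The forests with a given underlying word. -/
def parses (l : List (Arr E)) : Finset (NCForest E) := (finite_word_eq l).toFinset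

@[simp] lemma mem_parses {l : List (Arr E)} {F : NCForest E} : F ∈ parses l ↔ F.word = l := by
  simp [parses]

end NCForest

/-! ### The dual tree of a cut -/

namespace NCForest

variable {I E : Type*}

/-- The branches of the dual tree at the outer face. -/
def kids (s t : E → I) : NCForest E → List (Bool × ODTree s t)
  | nil => []
  | arr _ F => kids s t F
  | chord a G F =>
      (a.isLeft, .node (mkNk s t (atgt s t a) G.outerWord) (kids s t G)) :: kids s t F

/-- The dual tree, rooted at the outer face. -/
def tree (s t : E → I) (v : I) (F : NCForest E) : ODTree s t :=
  .node (mkNk s t v F.outerWord) (F.kids s t)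

lemma kids_eq_map_tops (s t : E → I) (F : NCForest E) (lo : ℕ) :
    F.kids s t = (tops lo F).map fun x => (x.2.1.isLeft, x.2.2.tree s t (atgt s t x.2.1)) := by
  induction F generalizing lo with
  | nil => rfl
  | arr a F ih => exact ih _
  | chord a G F ihG ihF => simp [kids, tops, tree, ihF (lo + 2 + G.word.length)]

lemma tops_mem_chords (F : NCForest E) (lo : ℕ) {x : (ℕ × ℕ) × Arr E × NCForest E}
    (hx : x ∈ tops lo F) : x.1 ∈ chords lo F ∧ x.1.2 = x.1.1 + 1 + x.2.2.word.length := by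
  induction F generalizing lo with
  | nil => simp [tops] at hx
  | arr a F ih => exact ih _ hx
  | chord a G F ihG ihF =>
    simp only [tops, List.mem_cons] at hx
    simp only [chords, Finset.mem_insert, Finset.mem_union]
    rcases hx with rfl | hx
    · simp
    · exact ⟨.inr (.inr (ihF _ hx).1), (ihF _ hx).2⟩

lemma tops_chords_below (F : NCForest E) (lo : ℕ) {x : (ℕ × ℕ) × Arr E × NCForest E}
    (hx : x ∈ tops lo F) (c : ℕ × ℕ) :
    (c ∈ chords lo F ∧ x.1.1 < c.1 ∧ c.2 < x.1.2) ↔ c ∈ chords (x.1.1 + 1) x.2.2 := by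
  induction F generalizing lo with
  | nil => simp [tops] at hx
  | arr a F ih => exact ih _ hx
  | chord a G F ihG ihF =>
    simp only [tops, List.mem_cons] at hx
    simp only [chords, Finset.mem_insert, Finset.mem_union]
    rcases hx with rfl | hx
    · constructor
      · rintro ⟨rfl | h | h, h1, h2⟩
        · simp at h1
        · exact h
        · have := chords_bounds _ _ h; simp only at h1 h2; omega
      · intro h
        have := chords_bounds _ _ h
        dsimp only at this ⊢
        exact ⟨.inr (.inl h), by omega, by omega⟩
    · rw [← ihF _ hx]
      have hb := chords_bounds _ _ (tops_mem_chords _ _ hx).1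
      constructor
      · rintro ⟨rfl | h | h, h1, h2⟩
        · simp only at h1 h2; omega
        · have := chords_bounds _ _ h; omega
        · exact ⟨h, h1, h2⟩
      · rintro ⟨h, h1, h2⟩
        exact ⟨.inr (.inr h), h1, h2⟩

lemma tops_word (F : NCForest E) (pre post : List (Arr E))
    {x : (ℕ × ℕ) × Arr E × NCForest E} (hx : x ∈ tops pre.length F) :
    ∃ p q, pre ++ F.word ++ post = p ++ x.2.1 :: (x.2.2.word ++ q) ∧ p.length = x.1.1 := by
  induction F generalizing pre with
  | nil => simp [tops] at hx
  | arr a F ih =>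
    simpa [word] using ih (pre ++ [a]) (by simpa [tops] using hx)
  | chord a G F ihG ihF =>
    simp only [tops, List.mem_cons] at hx
    rcases hx with rfl | hx
    · exact ⟨pre, astar a :: (F.word ++ post), by simp [word], rfl⟩
    · simpa [word] using ihF (pre ++ a :: (G.word ++ [astar a])) (by
        convert hx using 2; simp; omega)

lemma mem_map_tops (F : NCForest E) (lo : ℕ) (c : ℕ × ℕ) :
    c ∈ (tops lo F).map Prod.fst ↔
      c ∈ chords lo F ∧ ∀ c' ∈ chords lo F, ¬ (c'.1 < c.1 ∧ c.2 < c'.2) := by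
  induction F generalizing lo with
  | nil => simp [tops, chords]
  | arr a F ih => exact ih _
  | chord a G F ihG ihF =>
    simp only [tops, List.map_cons, List.mem_cons, ihF, chords, Finset.mem_insert,
      Finset.mem_union]
    constructor
    · rintro (rfl | ⟨h, h'⟩)
      · refine ⟨.inl rfl, ?_⟩
        rintro c (rfl | h | h) h' <;> simp only at h'
        · omega
        · have := chords_bounds _ _ h; omega
        · have := chords_bounds _ _ h; omega
      · refine ⟨.inr (.inr h), ?_⟩
        have hb := chords_bounds _ _ h
        rintro c' (rfl | h1 | h1) h2
        · simp only at h2; omega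
        · have := chords_bounds _ _ h1; omega
        · exact h' _ h1 h2
    · rintro ⟨rfl | h | h, h'⟩
      · exact .inl rfl
      · have := chords_bounds _ _ h
        exact absurd (h' _ (.inl rfl)) (by simp only; omega)
      · exact .inr ⟨h, fun c' hc' => h' c' (.inr (.inr hc'))⟩

lemma pairwise_tops (F : NCForest E) (lo : ℕ) :
    ((tops lo F).map Prod.fst).Pairwise fun c c' => c.1 < c'.1 := by
  induction F generalizing lo with
  | nil => simp [tops]
  | arr a F ih => exact ih _
  | chord a G F ihG ihF =>
    simp only [tops, List.map_cons, List.pairwise_cons]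
    refine ⟨fun c hc => ?_, ihF _⟩
    have := chords_bounds _ _ ((mem_map_tops _ _ _).1 hc).1
    omega

lemma mem_outerIdx (F : NCForest E) (lo m : ℕ) :
    m ∈ outerIdx lo F ↔ lo ≤ m ∧ m < lo + F.word.length ∧
      ∀ c ∈ (tops lo F).map Prod.fst, ¬ (c.1 ≤ m ∧ m ≤ c.2) := by
  have hb : ∀ (F : NCForest E) (lo : ℕ), ∀ c ∈ (tops lo F).map Prod.fst, lo ≤ c.1 := fun F lo c hc =>
    (chords_bounds _ _ ((mem_map_tops _ _ _).1 hc).1).1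
  induction F generalizing lo with
  | nil =>
    simp only [outerIdx, List.not_mem_nil, word, List.length_nil, false_iff]
    omega
  | arr a F ih =>
    simp only [outerIdx, List.mem_cons, ih, word, List.length_cons, tops]
    have := hb F (lo + 1)
    constructor
    · rintro (rfl | ⟨h1, h2, h3⟩)
      · refine ⟨le_rfl, by omega, fun c hc h => ?_⟩
        have := this c hc
        omega
      · exact ⟨by omega, by omega, h3⟩
    · rintro ⟨h1, h2, h3⟩
      rcases h1.eq_or_lt with h | h
      · exact .inl h.symm
      · exact .inr ⟨h, by omega, h3⟩
  | chord a G F ihG ihF =>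
    simp only [outerIdx, ihF, word, List.length_cons, List.length_append, tops, List.map_cons,
      List.forall_mem_cons]
    constructor
    · rintro ⟨h1, h2, h3⟩
      exact ⟨by omega, by omega, by omega, h3⟩
    · rintro ⟨h1, h2, h3, h4⟩
      exact ⟨by omega, by omega, h4⟩

lemma pairwise_outerIdx (F : NCForest E) (lo : ℕ) : (outerIdx lo F).Pairwise (· < ·) := by
  induction F generalizing lo with
  | nil => simp [outerIdx]
  | arr a F ih =>
    simp only [outerIdx, List.pairwise_cons]
    refine ⟨fun m hm => ?_, ih _⟩
    have := (mem_outerIdx _ _ _).1 hm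
    omega
  | chord a G F ihG ihF => exact ihF _

lemma filterMap_outerIdx (F : NCForest E) (pre post : List (Arr E)) :
    (outerIdx pre.length F).filterMap (fun m => (pre ++ F.word ++ post)[m]?) = F.outerWord := by
  induction F generalizing pre with
  | nil => simp [outerIdx, outerWord]
  | arr a F ih =>
    have := ih (pre ++ [a])
    simp only [List.append_assoc, List.length_append, List.length_cons, List.length_nil,
      List.cons_append, List.nil_append] at this
    simp [outerIdx, outerWord, word, this]
  | chord a G F ihG ihF =>
    have := ihF (pre ++ a :: (G.word ++ [astar a]))
    simp only [List.append_assoc, List.length_append, List.length_cons, List.length_nil,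
      List.cons_append, List.nil_append] at this
    rw [outerIdx, outerWord, ← this, word]
    simp only [List.append_assoc, List.cons_append]
    congr 2; omega

lemma _root_.List.eq_of_pairwise_lt_of_mem_iff {α : Type*} (f : α → ℕ) {l m : List α}
    (hl : l.Pairwise fun a b => f a < f b) (hm : m.Pairwise fun a b => f a < f b)
    (h : ∀ a, a ∈ l ↔ a ∈ m) : l = m := by
  have nd : ∀ {l : List α}, l.Pairwise (fun a b => f a < f b) → l.Nodup := fun h =>
    h.imp fun {a b} hab => by rintro rfl; exact lt_irrefl _ hab
  refine List.Perm.eq_of_pairwise (fun a b _ _ h1 h2 => absurd h1 (lt_asymm h2)) hl hm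
    ((List.perm_ext_iff_of_nodup (nd hl) (nd hm)).2 h)

lemma buildOT_eq_tree (s t : E → I) (fuel : ℕ) : ∀ (F : NCForest E) (pre post : List (Arr E))
    (H : List (ℕ × ℕ)) (v : I), F.word.length < fuel →
    (∀ c, c ∈ H ↔ c ∈ chords pre.length F) →
    buildOT s t (pre ++ F.word ++ post) fuel H pre.length (pre.length + F.word.length) v =
      F.tree s t v := by
  induction fuel with
  | zero => intro F pre post H v h; simp at h
  | succ fuel ih =>
    intro F pre post H v hF hH
    have hfind : ∀ i c, H.find? (fun c => c.1 == i) = some c ↔ c ∈ chords pre.length F ∧ c.1 = i := by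
      intro i c
      constructor
      · intro h
        exact ⟨(hH c).1 (List.mem_of_find?_eq_some h), by simpa using List.find?_some h⟩
      · rintro ⟨hc, rfl⟩
        cases h : H.find? (fun c' => c'.1 == c.1) with
        | none =>
          have := List.find?_eq_none.1 h c ((hH c).2 hc)
          simp at this
        | some c' =>
          have h1 := (hH c').1 (List.mem_of_find?_eq_some h)
          have h2 : c'.1 = c.1 := by simpa using List.find?_some h
          by_contra hne
          exact (chords_disjoint F _ h1 hc (by rintro rfl; exact hne rfl)).1.1 h2
    have houter : (List.range (pre ++ F.word ++ post).length).filterMap (fun i =>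
        match H.find? (fun c => c.1 == i) with
        | some c => if pre.length ≤ c.1 ∧ c.2 < pre.length + F.word.length ∧
            ¬ (H.any (fun c' => decide (c' ≠ c ∧ pre.length ≤ c'.1 ∧ c'.1 < c.1 ∧ c.2 < c'.2 ∧
                c'.2 < pre.length + F.word.length)))
            then some c else none
        | none => none) = (tops pre.length F).map Prod.fst := by
      have hg : ∀ i c, (match H.find? (fun c => c.1 == i) with
        | some c => if pre.length ≤ c.1 ∧ c.2 < pre.length + F.word.length ∧
            ¬ (H.any (fun c' => decide (c' ≠ c ∧ pre.length ≤ c'.1 ∧ c'.1 < c.1 ∧ c.2 < c'.2 ∧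
                c'.2 < pre.length + F.word.length)))
            then some c else none
        | none => none) = some c ↔ c ∈ (tops pre.length F).map Prod.fst ∧ c.1 = i := by
        intro i c
        rw [mem_map_tops]
        cases hf : H.find? (fun c => c.1 == i) with
        | none =>
          simp only [reduceCtorEq, false_iff]
          rintro ⟨⟨hc, -⟩, hi⟩
          rw [(hfind i c).2 ⟨hc, hi⟩] at hf
          cases hf
        | some d =>
          obtain ⟨hd, hdi⟩ := (hfind i d).1 hf
          have hdb := chords_bounds _ _ hd
          simp only [Option.ite_none_right_eq_some, Option.some.injEq, List.any_eq_true,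
            decide_eq_true_eq]
          constructor
          · rintro ⟨⟨-, -, h3⟩, rfl⟩
            refine ⟨⟨hd, fun c' hc' hcc => h3 ⟨c', (hH c').2 hc', ?_⟩⟩, hdi⟩
            have := chords_bounds _ _ hc'
            exact ⟨by rintro rfl; omega, by omega, by omega, by omega, by omega⟩
          · rintro ⟨⟨hc, h⟩, hi⟩
            have : some d = some c := by rw [← hf]; exact (hfind i c).2 ⟨hc, hi⟩
            obtain rfl : d = c := by simpa using this
            refine ⟨⟨by omega, by omega, ?_⟩, rfl⟩
            rintro ⟨c', hc', -, -, h1, h2, -⟩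
            exact h c' ((hH c').1 hc') ⟨h1, h2⟩
      refine List.eq_of_pairwise_lt_of_mem_iff Prod.fst ?_ (pairwise_tops F _) ?_
      · refine List.Pairwise.filterMap _ ?_ List.pairwise_lt_range
        intro i j hij c hc c' hc'
        rw [((hg i c).1 hc).2, ((hg j c').1 hc').2]
        exact hij
      · intro c
        simp only [List.mem_filterMap, hg, List.mem_range]
        constructor
        · rintro ⟨i, -, h, -⟩
          exact h
        · intro h
          have := chords_bounds _ _ ((mem_map_tops _ _ _).1 h).1
          exact ⟨c.1, by simp only [List.length_append]; omega, h, rfl⟩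
    have hlbl : (List.range (pre ++ F.word ++ post).length).filterMap (fun m =>
        if pre.length ≤ m ∧ m < pre.length + F.word.length ∧
          ¬ ((tops pre.length F).map Prod.fst).any (fun c => decide (c.1 ≤ m ∧ m ≤ c.2))
        then (pre ++ F.word ++ post)[m]? else none) = F.outerWord := by
      rw [← filterMap_outerIdx F pre post]
      have : outerIdx pre.length F = (List.range (pre ++ F.word ++ post).length).filter
          (fun m => decide (m ∈ outerIdx pre.length F)) := by
        refine List.eq_of_pairwise_lt_of_mem_iff id (pairwise_outerIdx F _)
          (List.Pairwise.filter _ List.pairwise_lt_range) ?_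
        intro m
        simp only [List.mem_filter, decide_eq_true_eq, iff_and_self, List.mem_range,
          List.length_append]
        intro h
        have := (mem_outerIdx _ _ _).1 h
        omega
      rw [this, List.filterMap_filter]
      refine List.filterMap_congr fun m _ => ?_
      have hiff : (pre.length ≤ m ∧ m < pre.length + F.word.length ∧
          ¬ (((tops pre.length F).map Prod.fst).any (fun c => decide (c.1 ≤ m ∧ m ≤ c.2))) = true) ↔
          m ∈ outerIdx pre.length F := by
        rw [mem_outerIdx]
        simp only [List.any_eq_true, decide_eq_true_eq, not_exists, not_and]
      by_cases hm : m ∈ outerIdx pre.length F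
      · rw [if_pos (hiff.2 hm), if_pos (by simpa using hm)]
      · rw [if_neg (fun h => hm (hiff.1 h)), if_neg (by simpa using hm)]
    rw [buildOT]
    rw [houter, hlbl, tree, kids_eq_map_tops s t F pre.length, List.map_map]
    congr 1
    refine List.map_congr_left fun x hx => ?_
    obtain ⟨⟨i, j⟩, a, G⟩ := x
    obtain ⟨p, q, hpq, hp⟩ := tops_word F pre post hx
    obtain ⟨hmem, hij⟩ := tops_mem_chords F _ hx
    have hb := chords_bounds _ _ hmem
    have hbelow := tops_chords_below F _ hx
    dsimp only [Function.comp] at hpq hp hij hb hbelow ⊢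
    have hi : (pre ++ F.word ++ post)[i]? = some a := by simp [hpq, ← hp]
    rw [hi]
    dsimp only
    congr 1
    · cases a <;> rfl
    · have := ih G (p ++ [a]) q (H.filter (fun c' => decide (i < c'.1 ∧ c'.2 < j))) (atgt s t a)
        (by omega) (by
          intro c
          rw [List.length_append, hp, List.length_singleton, ← hbelow, List.mem_filter, hH,
            decide_eq_true_eq])
      rw [List.length_append, hp, List.length_singleton, ← hij] at this
      simpa [hpq] using this

end NCForest

/-! ### Rotation of forests -/

namespace NCForest

variable {I E : Type*}

@[simp] lemma word_append (F K : NCForest E) : (F.append K).word = F.word ++ K.word := by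
  induction F with
  | nil => rfl
  | arr a F ih => simp [append, word, ih]
  | chord a G F ihG ihF => simp [append, word, ihF]

@[simp] lemma outerWord_append (F K : NCForest E) :
    (F.append K).outerWord = F.outerWord ++ K.outerWord := by
  induction F with
  | nil => rfl
  | arr a F ih => simp [append, outerWord, ih]
  | chord a G F ihG ihF => simp [append, outerWord, ihF]

@[simp] lemma kids_append (s t : E → I) (F K : NCForest E) :
    (F.append K).kids s t = F.kids s t ++ K.kids s t := by
  induction F with
  | nil => rfl
  | arr a F ih => simp [append, kids, ih]
  | chord a G F ihG ihF => simp [append, kids, ihF]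

/-- Move the first arrow to the end of the word. -/
def rot : NCForest E → NCForest E
  | nil => nil
  | arr a F => F.append (arr a nil)
  | chord a G F => G.append (chord (astar a) F nil)

/-- Apply `f` to the forest between the first arrow and either its partner or the end of the
word. -/
def mapAfterHead (f : NCForest E → NCForest E) : NCForest E → NCForest E
  | nil => nil
  | arr b F => arr b (f F)
  | chord b G F => chord b (f G) F

/-- Move the last arrow to the beginning of the word. -/
def unrot : NCForest E → NCForest E
  | nil => nil
  | arr a nil => arr a nil
  | arr a F => mapAfterHead (arr a) (unrot F)
  | chord a G nil => chord (astar a) nil G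
  | chord a G F => mapAfterHead (chord a G) (unrot F)

lemma unrot_append_arr (F : NCForest E) (a : Arr E) : unrot (F.append (arr a nil)) = arr a F := by
  induction F with
  | nil => rfl
  | arr b F ih => cases F <;> simp_all [append, unrot, mapAfterHead]
  | chord b G F ihG ihF => cases F <;> simp_all [append, unrot, mapAfterHead]

lemma unrot_append_chord (F G : NCForest E) (a : Arr E) :
    unrot (F.append (chord a G nil)) = chord (astar a) F G := by
  induction F with
  | nil => rfl
  | arr b F ih => cases F <;> simp_all [append, unrot, mapAfterHead]
  | chord b G F ihG ihF => cases F <;> simp_all [append, unrot, mapAfterHead]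

lemma unrot_rot (F : NCForest E) : unrot (rot F) = F := by
  cases F <;> simp [rot, unrot_append_arr, unrot_append_chord, unrot]

lemma exists_append (F : NCForest E) (hF : F ≠ nil) :
    ∃ G : NCForest E, (∃ a, F = G.append (arr a nil)) ∨ ∃ a K, F = G.append (chord a K nil) := by
  induction F with
  | nil => exact absurd rfl hF
  | arr b F ih =>
    by_cases h : F = nil
    · subst h; exact ⟨nil, .inl ⟨b, rfl⟩⟩
    · obtain ⟨G, ⟨a, rfl⟩ | ⟨a, K, rfl⟩⟩ := ih h
      · exact ⟨arr b G, .inl ⟨a, rfl⟩⟩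
      · exact ⟨arr b G, .inr ⟨a, K, rfl⟩⟩
  | chord b K' F ihK ih =>
    by_cases h : F = nil
    · subst h; exact ⟨nil, .inr ⟨b, K', rfl⟩⟩
    · obtain ⟨G, ⟨a, rfl⟩ | ⟨a, K, rfl⟩⟩ := ih h
      · exact ⟨chord b K' G, .inl ⟨a, rfl⟩⟩
      · exact ⟨chord b K' G, .inr ⟨a, K, rfl⟩⟩

lemma rot_unrot (F : NCForest E) : rot (unrot F) = F := by
  by_cases h : F = nil
  · subst h; rfl
  · obtain ⟨G, ⟨a, rfl⟩ | ⟨a, K, rfl⟩⟩ := exists_append F h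
    · rw [unrot_append_arr, rot]
    · rw [unrot_append_chord, rot, astar_astar]

lemma word_rot {F : NCForest E} {a : Arr E} {l : List (Arr E)} (h : F.word = a :: l) :
    F.rot.word = l ++ [a] := by
  cases F with
  | nil => simp [word] at h
  | arr b F => simp_all [word, rot]
  | chord b G F =>
    obtain ⟨rfl, rfl⟩ := List.cons.inj h
    simp [word, rot]

lemma word_unrot {F : NCForest E} {a : Arr E} {l : List (Arr E)} (h : F.word = l ++ [a]) :
    F.unrot.word = a :: l := by
  have hne : F ≠ nil := by rintro rfl; simp [word] at h
  obtain ⟨G, ⟨b, rfl⟩ | ⟨b, K, rfl⟩⟩ := exists_append F hne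
  · simp only [word_append, word] at h
    obtain ⟨rfl, h⟩ := List.append_inj' h rfl
    obtain rfl : b = a := by simpa using h
    rw [unrot_append_arr, word]
  · simp only [word_append, word] at h
    rw [← List.cons_append, ← List.append_assoc] at h
    obtain ⟨rfl, h⟩ := List.append_inj' h rfl
    obtain rfl : astar b = a := by simpa using h
    rw [unrot_append_chord, word, astar_astar]

lemma path_outerWord (s t : E → I) (F : NCForest E) (v : I) (h : IsPathFrom s t v F.word) :
    IsPathFrom s t v F.outerWord ∧ pathTgt s t v F.outerWord = pathTgt s t v F.word := by
  induction F generalizing v with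
  | nil => exact ⟨trivial, rfl⟩
  | arr a F ih => exact ⟨⟨h.1, (ih _ h.2).1⟩, (ih _ h.2).2⟩
  | chord a G F ihG ihF =>
    simp only [word, IsPathFrom, isPathFrom_append, atgt_astar] at h
    obtain ⟨rfl, -, -, h⟩ := h
    simpa only [word, outerWord, pathTgt, pathTgt_append, atgt_astar] using ihF _ h

end NCForest

lemma Finsupp.lift_single_one {k M X : Type*} [CommRing k] [AddCommGroup M] [Module k M]
    (f : X → M) (x : X) : Finsupp.lift M k X f (Finsupp.single x 1) = f x := by
  simp

section Necklaces

variable (k : Type*) [CommRing k] {I E : Type*} {s t : E → I}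

lemma mkNk_of_closed {v : I} {l : List (Arr E)} (h : IsPathFrom s t v l ∧ pathTgt s t v l = v) :
    mkNk s t v l = Quot.mk (RotRel s t) ⟨⟨v, l, h.1⟩, h.2⟩ := dif_pos h

lemma closed_rotate {v : I} {a : Arr E} {l : List (Arr E)}
    (h : IsPathFrom s t v (a :: l) ∧ pathTgt s t v (a :: l) = v) :
    IsPathFrom s t (atgt s t a) (l ++ [a]) ∧ pathTgt s t (atgt s t a) (l ++ [a]) = atgt s t a := by
  obtain ⟨⟨h1, h2⟩, h3⟩ := h
  simp only [pathTgt] at h3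
  simp [isPathFrom_append, pathTgt_append, IsPathFrom, pathTgt, h1, h2, h3]

lemma mkNk_rotate {v : I} {a : Arr E} {l : List (Arr E)}
    (h : IsPathFrom s t v (a :: l) ∧ pathTgt s t v (a :: l) = v) :
    mkNk s t v (a :: l) = mkNk s t (atgt s t a) (l ++ [a]) := by
  rw [mkNk_of_closed h, mkNk_of_closed (closed_rotate h)]
  exact Quot.sound ⟨a, l, rfl, rfl, rfl⟩

lemma NCForest.tree_rot {v : I} {a : Arr E} {l : List (Arr E)} {F : NCForest E}
    (hF : F.word = a :: l) (h : IsPathFrom s t v (a :: l) ∧ pathTgt s t v (a :: l) = v) :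
    (Quot.mk ODTree.Rel (F.tree s t v) : ODT s t) =
      Quot.mk ODTree.Rel (F.rot.tree s t (atgt s t a)) := by
  cases F with
  | nil => simp [word] at hF
  | arr b F =>
    have hout := (arr b F).path_outerWord s t v (hF ▸ h.1)
    rw [hF, h.2] at hout
    obtain rfl : b = a := by simp_all [word]
    simp only [tree, outerWord, kids, rot, outerWord_append, kids_append, List.append_nil]
    rw [mkNk_rotate hout]
  | chord b G F =>
    obtain rfl : b = a := by simp_all [word]
    simp only [tree, outerWord, kids, rot, outerWord_append, kids_append, List.append_nil,
      isLeft_astar, atgt_astar, h.1.1]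
    exact Quot.sound .reroot

variable (s t)

/-- The sum of the dual trees of all cuts of a path. -/
def cutSum (v : I) (l : List (Arr E)) : ODMod k s t :=
  ∑ F ∈ NCForest.parses l, Finsupp.single (Quot.mk ODTree.Rel (F.tree s t v)) 1

lemma sum_allCuts_eq_cutSum (v : I) (l : List (Arr E)) :
    ∑ H ∈ allCuts l, (Finsupp.single (Quot.mk ODTree.Rel
      (buildOT s t l (l.length + 1) H.toList 0 l.length v)) 1 : ODMod k s t) =
      cutSum k s t v l := by
  symm
  refine Finset.sum_bij (fun F _ => F.chords 0) ?_ ?_ ?_ ?_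
  · intro F hF
    rw [NCForest.mem_parses] at hF
    exact NCForest.mem_allCuts.2 (hF ▸ F.isCut_chords)
  · intro F hF F' hF' h
    rw [NCForest.mem_parses] at hF hF'
    exact NCForest.chords_injective (hF.trans hF'.symm) h
  · intro H hH
    obtain ⟨F, hF, rfl⟩ := NCForest.exists_of_isCut (NCForest.mem_allCuts.1 hH)
    exact ⟨F, NCForest.mem_parses.2 hF, rfl⟩
  · intro F hF
    rw [NCForest.mem_parses] at hF
    subst hF
    have := NCForest.buildOT_eq_tree s t (F.word.length + 1) F [] [] (F.chords 0).toList v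
      (by omega) (by simp)
    simp only [List.nil_append, List.append_nil, List.length_nil, zero_add] at this
    rw [this]

variable {s t}

lemma cutSum_rotate {v : I} {a : Arr E} {l : List (Arr E)}
    (h : IsPathFrom s t v (a :: l) ∧ pathTgt s t v (a :: l) = v) :
    cutSum k s t v (a :: l) = cutSum k s t (atgt s t a) (l ++ [a]) := by
  refine Finset.sum_bij' (fun F _ => F.rot) (fun F _ => F.unrot) ?_ ?_ ?_ ?_ ?_
  · intro F hF
    exact NCForest.mem_parses.2 (NCForest.word_rot (NCForest.mem_parses.1 hF))
  · intro F hF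
    exact NCForest.mem_parses.2 (NCForest.word_unrot (NCForest.mem_parses.1 hF))
  · intro F _; exact F.unrot_rot
  · intro F _; exact F.rot_unrot
  · intro F hF
    rw [NCForest.tree_rot (NCForest.mem_parses.1 hF) h]

lemma cutSum_append_comm {v : I} (l m : List (Arr E))
    (h : IsPathFrom s t v (l ++ m) ∧ pathTgt s t v (l ++ m) = v) :
    cutSum k s t v (l ++ m) = cutSum k s t (pathTgt s t v l) (m ++ l) := by
  induction l generalizing v m with
  | nil => simp [pathTgt]
  | cons a l ih =>
    rw [List.cons_append] at h ⊢
    have hr := closed_rotate h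
    rw [cutSum_rotate k h, List.append_assoc, ih _ (by simpa using hr), pathTgt]
    simp

lemma etaOr_single_mk (p : ClosedQPath s t) :
    etaOr k s t (Finsupp.single (Quot.mk _ p) 1) = cutSum k s t p.path.src p.path.arrows := by
  let C : Necklace s t → ODMod k s t :=
    Quot.lift (fun p => cutSum k s t p.path.src p.path.arrows) (by
      rintro ⟨⟨v, m, hm⟩, hm'⟩ ⟨⟨w, n, hn⟩, hn'⟩ ⟨a, l, h1, h2, h3⟩
      dsimp only at h1 h2 h3 ⊢
      subst h1 h2 h3
      exact cutSum_rotate k ⟨hm, hm'⟩)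
  have : ∀ q : Necklace s t, cutSum k s t q.out.path.src q.out.path.arrows = C q := fun q => by
    conv_rhs => rw [← Quot.out_eq q]
  simp only [etaOr, sum_allCuts_eq_cutSum, this]
  exact Finsupp.lift_single_one C (Quot.mk _ p)

lemma etaOr_mkN {v : I} {l : List (Arr E)} (h : IsPathFrom s t v l ∧ pathTgt s t v l = v) :
    etaOr k s t (mkN k s t v l) = cutSum k s t v l := by
  rw [mkN, dif_pos h, etaOr_single_mk]

/-! ### Injectivity -/

variable (s t) in
/-- The linear map sending a one-vertex tree to its label and every other tree to zero. -/
def vertexLabel : ODMod k s t →ₗ[k] NeckMod k s t :=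
  Finsupp.lift (NeckMod k s t) k (ODT s t) (Quot.lift
    (fun | .node x [] => Finsupp.single x 1
         | .node _ (_ :: _) => 0)
    (by
      rintro _ _ (_ | _)
      · rename_i x c cs
        cases cs <;> rfl
      · rename_i x y b ls ts
        cases ls <;> rfl))

/-- The forest without chords. -/
def NCForest.ofList : List (Arr E) → NCForest E
  | [] => .nil
  | a :: l => .arr a (ofList l)

lemma NCForest.word_ofList (l : List (Arr E)) : (ofList l).word = l := by
  induction l with
  | nil => rfl
  | cons a l ih => simp [ofList, word, ih]

lemma NCForest.eq_ofList_of_kids_eq_nil (F : NCForest E) (h : F.kids s t = []) :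
    F = ofList F.word := by
  induction F with
  | nil => rfl
  | arr a F ih => rw [word, ofList, ← ih h]
  | chord a G F ihG ihF => simp [kids] at h

lemma NCForest.outerWord_ofList (l : List (Arr E)) : (ofList l).outerWord = l := by
  induction l with
  | nil => rfl
  | cons a l ih => simp [ofList, outerWord, ih]

lemma NCForest.kids_ofList (l : List (Arr E)) : (ofList l).kids s t = [] := by
  induction l with
  | nil => rfl
  | cons a l ih => simp [ofList, kids, ih]

lemma vertexLabel_cutSum (v : I) (l : List (Arr E)) :
    vertexLabel k s t (cutSum k s t v l) = Finsupp.single (mkNk s t v l) 1 := by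
  rw [cutSum, map_sum, Finset.sum_eq_single (NCForest.ofList l)]
  · rw [NCForest.tree, NCForest.outerWord_ofList, NCForest.kids_ofList]
    exact Finsupp.lift_single_one _ _
  · intro F hF hne
    rw [NCForest.mem_parses] at hF
    have : F.kids s t ≠ [] := fun h => hne (by rw [F.eq_ofList_of_kids_eq_nil h, hF])
    obtain ⟨c, cs, hc⟩ := List.exists_cons_of_ne_nil this
    rw [NCForest.tree, hc]
    exact Finsupp.lift_single_one _ _
  · intro h
    exact absurd (NCForest.mem_parses.2 (NCForest.word_ofList l)) h

lemma vertexLabel_comp_etaOr : vertexLabel k s t ∘ₗ etaOr k s t = LinearMap.id := by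
  refine Finsupp.lhom_ext' fun q => LinearMap.ext_ring ?_
  induction q using Quot.ind with
  | mk p =>
    refine (congrArg (vertexLabel k s t) (etaOr_single_mk k p)).trans ?_
    rw [vertexLabel_cutSum, mkNk_of_closed ⟨p.path.valid, p.closed⟩]
    rfl

end Necklaces

/-! ### The cobracket on decorated trees -/

section EdgeCuts

variable (k : Type*) [CommRing k] {I E : Type*} {s t : E → I}

/-- The summand of the cobracket of decorated trees for an edge with orientation flag `b`, the
component `A` away from the root and the component `B` containing the root. -/
def edgeTerm (b : Bool) (A B : ODT s t) : ODMod k s t ⊗[k] ODMod k s t :=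
  let x : ODMod k s t := Finsupp.single A 1
  let y : ODMod k s t := Finsupp.single B 1
  if b then y ⊗ₜ[k] x - x ⊗ₜ[k] y else x ⊗ₜ[k] y - y ⊗ₜ[k] x

lemma edgeTerm_not (b : Bool) (A B : ODT s t) : edgeTerm k (!b) A B = edgeTerm k b B A := by
  cases b <;> rfl

/-- The cobracket of a representative of a decorated tree. -/
def treeCobracket (T : ODTree s t) : ODMod k s t ⊗[k] ODMod k s t :=
  (T.cuts.map fun p => edgeTerm k p.1 (Quot.mk ODTree.Rel p.2.1) (Quot.mk ODTree.Rel p.2.2)).sum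

lemma ODTree.cutsL_append (l m : List (Bool × ODTree s t)) :
    ODTree.cutsL (l ++ m) =
      (ODTree.cutsL l).map (fun p => (p.1, p.2.1, p.2.2 ++ m)) ++
        (ODTree.cutsL m).map (fun p => (p.1, p.2.1, l ++ p.2.2)) := by
  induction l with
  | nil => simp [ODTree.cutsL]
  | cons c l ih =>
    obtain ⟨b, u⟩ := c
    simp [ODTree.cutsL, ih, Function.comp_def]

lemma treeCobracket_rel {T T' : ODTree s t} (h : ODTree.Rel T T') :
    treeCobracket k T = treeCobracket k T' := by
  rcases h with @⟨x, ⟨b, u⟩, cs⟩ | @⟨x, y, b, ls, ts⟩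
  · have h : ∀ ds : List (Bool × ODTree s t), ∀ c, (Quot.mk ODTree.Rel (.node x (c :: ds)) : ODT s t) =
        Quot.mk ODTree.Rel (.node x (ds ++ [c])) := fun ds c => Quot.sound .rot
    simp only [treeCobracket, ODTree.cuts, ODTree.cutsL_append, ODTree.cutsL, List.map_append,
      List.map_map, List.map_cons, List.map_nil, List.append_nil, List.sum_append, List.sum_cons,
      Function.comp_def, h]
    abel
  · have h : ∀ ls ts : List (Bool × ODTree s t),
        (Quot.mk ODTree.Rel (.node x ((b, .node y ls) :: ts)) : ODT s t) =
        Quot.mk ODTree.Rel (.node y (ls ++ [(!b, .node x ts)])) := fun ls ts => Quot.sound .reroot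
    simp only [treeCobracket, ODTree.cuts, ODTree.cutsL_append, ODTree.cutsL, List.map_append,
      List.map_map, List.map_cons, List.map_nil, List.append_nil, List.sum_append, List.sum_cons,
      Function.comp_def, h]
    rw [show edgeTerm k (!b) (Quot.mk ODTree.Rel (.node x ts)) (Quot.mk ODTree.Rel (.node y ls)) =
      edgeTerm k b _ _ from edgeTerm_not k b _ _]
    abel

lemma treeCobracket_out (T : ODTree s t) :
    treeCobracket k (Quot.out (Quot.mk ODTree.Rel T)) = treeCobracket k T := by
  have h := congrArg (Quot.lift (treeCobracket k) fun _ _ => treeCobracket_rel k)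
    (Quot.out_eq (Quot.mk ODTree.Rel T))
  rwa [← Quot.out_eq (Quot.mk ODTree.Rel T), Quot.out_eq (Quot.mk ODTree.Rel T)] at h

lemma rhoOD_eq_lift : rhoOD k s t =
    Finsupp.lift (ODMod k s t ⊗[k] ODMod k s t) k (ODT s t) fun q => treeCobracket k q.out := by
  refine congrArg (Finsupp.lift (ODMod k s t ⊗[k] ODMod k s t) k (ODT s t)) (funext fun q => ?_)
  refine congrArg List.sum (List.map_congr_left fun p _ => ?_)
  obtain ⟨b, A, B⟩ := p
  cases b <;> rfl

lemma rhoOD_single (q : ODT s t) : rhoOD k s t (Finsupp.single q 1) = treeCobracket k q.out := by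
  rw [rhoOD_eq_lift, Finsupp.lift_apply]
  refine (Finsupp.sum_single_index ?_).trans ?_
  · exact zero_smul k _
  · exact one_smul k _

lemma rhoOD_single_mk (T : ODTree s t) :
    rhoOD k s t (Finsupp.single (Quot.mk ODTree.Rel T) 1) = treeCobracket k T :=
  (rhoOD_single k (Quot.mk ODTree.Rel T)).trans (treeCobracket_out k T)

end EdgeCuts

/-! ### Forests with a marked chord -/

namespace NCForest

variable {I E : Type*}

/-- Insert at position `p` of `K` a chord starting with the arrow `a`, with `G` below it. -/
def insertChord (a : Arr E) (G : NCForest E) : ℕ → NCForest E → NCForest E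
  | 0, K => chord a G K
  | _ + 1, nil => nil
  | p + 1, arr b K => arr b (insertChord a G p K)
  | p + 1, chord b K K' =>
      if p ≤ K.word.length then chord b (insertChord a G p K) K'
      else chord b K (insertChord a G (p - K.word.length - 1) K')

/-- All ways of removing a chord together with what lies below it: the position of the chord, its
first arrow, the forest below it and the remaining forest. -/
def splits : NCForest E → List (ℕ × Arr E × NCForest E × NCForest E)
  | nil => []
  | arr b F => (splits F).map fun x => (x.1 + 1, x.2.1, x.2.2.1, arr b x.2.2.2)
  | chord a G F =>
      (0, a, G, F) :: ((splits G).map (fun x => (x.1 + 1, x.2.1, x.2.2.1, chord a x.2.2.2 F)) ++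
        (splits F).map fun x => (x.1 + G.word.length + 2, x.2.1, x.2.2.1, chord a G x.2.2.2))

lemma word_insertChord (a : Arr E) (G K : NCForest E) {p : ℕ} (hp : p ≤ K.word.length) :
    (insertChord a G p K).word =
      K.word.take p ++ a :: (G.word ++ astar a :: K.word.drop p) := by
  induction K generalizing p with
  | nil =>
    obtain rfl : p = 0 := by simpa [word] using hp
    simp [insertChord, word]
  | arr b K ih =>
    cases p with
    | zero => simp [insertChord, word]
    | succ p => simp [insertChord, word, ih (p := p) (by simpa [word] using hp)]
  | chord b K K' ihK ihK' =>
    cases p with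
    | zero => simp [insertChord, word]
    | succ p =>
      rw [insertChord]
      split_ifs with h
      · simp only [word, ihK h, List.take_succ_cons, List.drop_succ_cons,
          List.take_append_of_le_length h, List.drop_append_of_le_length h]
        simp
      · obtain ⟨d, rfl⟩ : ∃ d, p = K.word.length + (d + 1) := ⟨p - K.word.length - 1, by omega⟩
        rw [show K.word.length + (d + 1) - K.word.length - 1 = d by omega, word,
          ihK' (by simp [word] at hp; omega), word, List.take_succ_cons, List.drop_succ_cons,
          List.take_length_add_append, List.drop_length_add_append]
        simp

lemma insertChord_of_mem_splits (F : NCForest E) {x : ℕ × Arr E × NCForest E × NCForest E}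
    (hx : x ∈ splits F) :
    x.1 ≤ x.2.2.2.word.length ∧ insertChord x.2.1 x.2.2.1 x.1 x.2.2.2 = F := by
  induction F generalizing x with
  | nil => simp [splits] at hx
  | arr b F ih =>
    obtain ⟨y, hy, rfl⟩ := List.mem_map.1 hx
    simpa [word, insertChord] using ih hy
  | chord a G F ihG ihF =>
    simp only [splits, List.mem_cons, List.mem_append, List.mem_map] at hx
    rcases hx with rfl | ⟨y, hy, rfl⟩ | ⟨y, hy, rfl⟩
    · simp [insertChord]
    · obtain ⟨h1, h2⟩ := ihG hy
      refine ⟨by simp [word]; omega, ?_⟩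
      simp only [insertChord]
      rw [if_pos h1, h2]
    · obtain ⟨h1, h2⟩ := ihF hy
      refine ⟨by simp [word]; omega, ?_⟩
      simp only [insertChord]
      rw [if_neg (by omega),
        show y.1 + G.word.length + 1 - G.word.length - 1 = y.1 by omega, h2]

lemma mem_splits_insertChord (a : Arr E) (G K : NCForest E) {p : ℕ} (hp : p ≤ K.word.length) :
    (p, a, G, K) ∈ splits (insertChord a G p K) := by
  induction K generalizing p with
  | nil =>
    obtain rfl : p = 0 := by simpa [word] using hp
    simp [insertChord, splits]
  | arr b K ih =>
    cases p with
    | zero => simp [insertChord, splits]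
    | succ p =>
      exact List.mem_map.2 ⟨_, ih (p := p) (by simpa [word] using hp), rfl⟩
  | chord b K K' ihK ihK' =>
    cases p with
    | zero => simp [insertChord, splits]
    | succ p =>
      rw [insertChord]
      split_ifs with h
      · exact List.mem_cons_of_mem _ (List.mem_append_left _ (List.mem_map.2 ⟨_, ihK h, rfl⟩))
      · refine List.mem_cons_of_mem _ (List.mem_append_right _ (List.mem_map.2
          ⟨_, ihK' (p := p - K.word.length - 1) (by simp [word] at hp; omega), ?_⟩))
        simp; omega

lemma lt_of_mem_splits (F : NCForest E) {x : ℕ × Arr E × NCForest E × NCForest E}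
    (hx : x ∈ splits F) : x.1 < F.word.length := by
  obtain ⟨h1, h2⟩ := insertChord_of_mem_splits F hx
  rw [← h2, word_insertChord _ _ _ h1]
  simp; omega

lemma pairwise_splits (F : NCForest E) : (splits F).Pairwise fun x y => x.1 < y.1 := by
  induction F with
  | nil => simp [splits]
  | arr a F ih => simpa [splits, List.pairwise_map] using ih
  | chord a G F ihG ihF =>
    simp only [splits, List.pairwise_cons, List.pairwise_append, List.pairwise_map,
      List.mem_append, List.mem_map]
    refine ⟨?_, by simpa using ihG, by simpa using ihF, ?_⟩
    · rintro _ (⟨x, -, rfl⟩ | ⟨x, -, rfl⟩) <;> simp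
    · rintro _ ⟨x, hx, rfl⟩ _ ⟨y, -, rfl⟩
      have := lt_of_mem_splits _ hx
      simp only; omega

lemma nodup_splits (F : NCForest E) : (splits F).Nodup :=
  (pairwise_splits F).imp fun {a b} hab => by rintro rfl; exact lt_irrefl _ hab

lemma outerWord_of_mem_splits (F : NCForest E) {x : ℕ × Arr E × NCForest E × NCForest E}
    (hx : x ∈ splits F) : x.2.2.2.outerWord = F.outerWord := by
  induction F generalizing x with
  | nil => simp [splits] at hx
  | arr b F ih =>
    obtain ⟨y, hy, rfl⟩ := List.mem_map.1 hx
    simp [outerWord, ih hy]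
  | chord a G F ihG ihF =>
    simp only [splits, List.mem_cons, List.mem_append, List.mem_map] at hx
    rcases hx with rfl | ⟨y, hy, rfl⟩ | ⟨y, hy, rfl⟩
    · rfl
    · rfl
    · simpa only [outerWord] using ihF hy

lemma cutsL_kids (s t : E → I) (F : NCForest E) :
    ODTree.cutsL (F.kids s t) = (splits F).map fun x =>
      (x.2.1.isLeft, x.2.2.1.tree s t (atgt s t x.2.1), x.2.2.2.kids s t) := by
  induction F with
  | nil => simp [kids, splits, ODTree.cutsL]
  | arr a F ih => simpa [kids, splits, Function.comp_def] using ih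
  | chord a G F ihG ihF =>
    simp only [kids, splits, ODTree.cutsL, ODTree.cuts, ihG, ihF, List.map_cons, List.map_append,
      List.map_map, Function.comp_def, tree, List.cons_append]
    congr 2
    refine List.map_congr_left fun x hx => ?_
    rw [outerWord_of_mem_splits G hx]

lemma treeCobracket_tree (k : Type*) [CommRing k] (s t : E → I) (v : I) (F : NCForest E) :
    treeCobracket k (F.tree s t v) = ∑ x ∈ (splits F).toFinset,
      edgeTerm k x.2.1.isLeft (Quot.mk ODTree.Rel (x.2.2.1.tree s t (atgt s t x.2.1)))
        (Quot.mk ODTree.Rel (x.2.2.2.tree s t v)) := by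
  rw [List.sum_toFinset _ (nodup_splits F), treeCobracket, tree, ODTree.cuts, cutsL_kids,
    List.map_map, List.map_map]
  refine congrArg List.sum (List.map_congr_left fun x hx => ?_)
  simp only [Function.comp, tree]
  rw [outerWord_of_mem_splits F hx]

/-- The forests with a marked chord and a given underlying word. -/
def markedParses (l : List (Arr E)) : Finset (ℕ × Arr E × NCForest E × NCForest E) :=
  (parses l).biUnion fun F => (splits F).toFinset

lemma mem_markedParses {l : List (Arr E)} {x : ℕ × Arr E × NCForest E × NCForest E} :
    x ∈ markedParses l ↔ x.1 ≤ x.2.2.2.word.length ∧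
      x.2.2.2.word.take x.1 ++ x.2.1 :: (x.2.2.1.word ++ astar x.2.1 :: x.2.2.2.word.drop x.1) =
        l := by
  simp only [markedParses, Finset.mem_biUnion, mem_parses, List.mem_toFinset]
  constructor
  · rintro ⟨F, rfl, hx⟩
    obtain ⟨h1, h2⟩ := insertChord_of_mem_splits F hx
    exact ⟨h1, by rw [← word_insertChord _ _ _ h1, h2]⟩
  · rintro ⟨h1, h2⟩
    exact ⟨_, by rw [word_insertChord _ _ _ h1, h2], mem_splits_insertChord _ _ _ h1⟩

lemma sum_parses_splits {M : Type*} [AddCommMonoid M] (l : List (Arr E))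
    (f : ℕ × Arr E × NCForest E × NCForest E → M) :
    ∑ F ∈ parses l, ∑ x ∈ (splits F).toFinset, f x = ∑ x ∈ markedParses l, f x := by
  refine (Finset.sum_biUnion fun F _ F' _ hne => ?_).symm
  refine Finset.disjoint_left.2 fun x hx hx' => hne ?_
  rw [← (insertChord_of_mem_splits F (List.mem_toFinset.1 hx)).2,
    (insertChord_of_mem_splits F' (List.mem_toFinset.1 hx')).2]

lemma sum_markedParses {M : Type*} [AddCommMonoid M] (l : List (Arr E))
    (f : ℕ × Arr E × NCForest E × NCForest E → M) :
    ∑ x ∈ markedParses l, f x = ∑ i ∈ Finset.range l.length, ∑ j ∈ Finset.range l.length,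
      ∑ x ∈ markedParses l with (x.1, x.1 + 1 + x.2.2.1.word.length) = (i, j), f x := by
  rw [← Finset.sum_fiberwise_of_maps_to (t := Finset.range l.length ×ˢ Finset.range l.length)
    (g := fun x => (x.1, x.1 + 1 + x.2.2.1.word.length)) (fun x hx => ?_) f, Finset.sum_product]
  obtain ⟨h1, rfl⟩ := mem_markedParses.1 hx
  simp; omega

lemma sum_markedParses_fiber {M : Type*} [AddCommMonoid M] (a : Arr E) (l₁ l₂ l₃ : List (Arr E))
    (f : ℕ × Arr E × NCForest E × NCForest E → M) :
    ∑ x ∈ markedParses (l₁ ++ a :: (l₂ ++ astar a :: l₃)) with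
        (x.1, x.1 + 1 + x.2.2.1.word.length) = (l₁.length, l₁.length + 1 + l₂.length), f x =
      ∑ G ∈ parses l₂, ∑ K ∈ parses (l₁ ++ l₃), f (l₁.length, a, G, K) := by
  have key : ∀ {x : ℕ × Arr E × NCForest E × NCForest E},
      (x ∈ markedParses (l₁ ++ a :: (l₂ ++ astar a :: l₃)) ∧
        (x.1, x.1 + 1 + x.2.2.1.word.length) = (l₁.length, l₁.length + 1 + l₂.length)) ↔
      x.1 = l₁.length ∧ x.2.1 = a ∧ x.2.2.1.word = l₂ ∧ x.2.2.2.word = l₁ ++ l₃ := by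
    rintro ⟨p, b, G, K⟩
    rw [mem_markedParses]
    dsimp only
    rw [Prod.mk.injEq]
    constructor
    · rintro ⟨⟨hp, h⟩, rfl, hG⟩
      obtain ⟨h1, h⟩ := List.append_inj h (by simpa using hp)
      obtain ⟨rfl, h⟩ := List.cons.inj h
      obtain ⟨h2, h⟩ := List.append_inj h (by omega)
      refine ⟨rfl, rfl, h2, ?_⟩
      exact (List.take_append_drop l₁.length K.word).symm.trans
        (congrArg₂ (· ++ ·) h1 (List.cons.inj h).2)
    · rintro ⟨rfl, rfl, rfl, hK⟩
      simp [hK]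
  rw [← Finset.sum_product' (parses l₂) (parses (l₁ ++ l₃)) fun G K => f (l₁.length, a, G, K)]
  refine Finset.sum_nbij' (fun x => (x.2.2.1, x.2.2.2)) (fun y => (l₁.length, a, y.1, y.2))
    ?_ ?_ ?_ ?_ ?_
  · intro x hx
    obtain ⟨-, -, h1, h2⟩ := key.1 (Finset.mem_filter.1 hx)
    exact Finset.mem_product.2 ⟨mem_parses.2 h1, mem_parses.2 h2⟩
  · intro y hy
    rw [Finset.mem_product, mem_parses, mem_parses] at hy
    exact Finset.mem_filter.2 (key.2 ⟨rfl, rfl, hy⟩)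
  · rintro ⟨p, b, G, K⟩ hx
    obtain ⟨rfl, rfl, -⟩ := key.1 (Finset.mem_filter.1 hx)
    rfl
  · intro y _
    rfl
  · rintro ⟨p, b, G, K⟩ hx
    obtain ⟨rfl, rfl, -⟩ := key.1 (Finset.mem_filter.1 hx)
    rfl

lemma markedParses_fiber_eq_empty {l : List (Arr E)} {i j : ℕ}
    (h : ¬ ∃ (a : Arr E) (l₁ l₂ l₃ : List (Arr E)), l = l₁ ++ a :: (l₂ ++ astar a :: l₃) ∧
      i = l₁.length ∧ j = l₁.length + 1 + l₂.length) :
    {x ∈ markedParses l | (x.1, x.1 + 1 + x.2.2.1.word.length) = (i, j)} = ∅ := by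
  refine Finset.filter_eq_empty_iff.2 fun {x} hx hij => h ?_
  obtain ⟨h1, h2⟩ := mem_markedParses.1 hx
  obtain ⟨rfl, rfl⟩ := Prod.mk.inj hij
  exact ⟨_, _, _, _, h2.symm, by simpa using h1, by simpa using h1⟩

end NCForest

/-! ### Compatibility with the cobrackets -/

section Cobracket

variable (k : Type*) [CommRing k] {I E : Type*} {s t : E → I}

lemma omg_astar (a : Arr E) : omg k a (astar a) = if a.isLeft then 1 else -1 := by
  cases a <;> simp [omg, astar]

lemma omg_eq_zero {a b : Arr E} (h : b ≠ astar a) : omg k a b = 0 := by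
  cases a <;> cases b <;> simp_all [omg, astar, eq_comm]

lemma sum_ite_tmul_sub {k M α β : Type*} [CommRing k] [AddCommGroup M] [Module k M] (c : Bool)
    (S : Finset α) (T : Finset β) (f : α → M) (g : β → M) :
    ∑ a ∈ S, ∑ b ∈ T,
      (if c then g b ⊗ₜ[k] f a - f a ⊗ₜ[k] g b else f a ⊗ₜ[k] g b - g b ⊗ₜ[k] f a) =
    (if c then (1 : k) else -1) • ((∑ b ∈ T, g b) ⊗ₜ[k] (∑ a ∈ S, f a) -
      (∑ a ∈ S, f a) ⊗ₜ[k] (∑ b ∈ T, g b)) := by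
  have h : (∑ b ∈ T, g b) ⊗ₜ[k] (∑ a ∈ S, f a) = ∑ a ∈ S, ∑ b ∈ T, g b ⊗ₜ[k] f a := by
    simp only [TensorProduct.sum_tmul, TensorProduct.tmul_sum]
  have h' : (∑ a ∈ S, f a) ⊗ₜ[k] (∑ b ∈ T, g b) = ∑ a ∈ S, ∑ b ∈ T, f a ⊗ₜ[k] g b := by
    simp only [TensorProduct.sum_tmul, TensorProduct.tmul_sum]
    exact Finset.sum_comm
  rw [h, h']
  cases c <;> simp [Finset.sum_sub_distrib]

lemma sum_edgeTerm (v w : I) (a : Arr E) (l m : List (Arr E)) :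
    ∑ G ∈ NCForest.parses l, ∑ K ∈ NCForest.parses m,
      edgeTerm k a.isLeft (Quot.mk ODTree.Rel (G.tree s t w)) (Quot.mk ODTree.Rel (K.tree s t v)) =
    omg k a (astar a) • (cutSum k s t v m ⊗ₜ[k] cutSum k s t w l -
      cutSum k s t w l ⊗ₜ[k] cutSum k s t v m) := by
  rw [omg_astar]
  exact sum_ite_tmul_sub _ _ _ _ _

lemma map_dorTerm (v : I) (a : Arr E) (l₁ l₂ l₃ : List (Arr E))
    (h : IsPathFrom s t v (l₁ ++ a :: (l₂ ++ astar a :: l₃)) ∧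
      pathTgt s t v (l₁ ++ a :: (l₂ ++ astar a :: l₃)) = v) :
    TensorProduct.map (etaOr k s t) (etaOr k s t)
      (dorTerm k s t v (l₁ ++ a :: (l₂ ++ astar a :: l₃)) l₁.length (l₁.length + 1 + l₂.length)) =
    omg k a (astar a) •
      (cutSum k s t v (l₁ ++ l₃) ⊗ₜ[k] cutSum k s t (atgt s t a) l₂ -
        cutSum k s t (atgt s t a) l₂ ⊗ₜ[k] cutSum k s t v (l₁ ++ l₃)) := by
  have hi : (l₁ ++ a :: (l₂ ++ astar a :: l₃))[l₁.length]? = some a := by simp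
  have hj : (l₁ ++ a :: (l₂ ++ astar a :: l₃))[l₁.length + 1 + l₂.length]? = some (astar a) := by
    rw [add_assoc, List.getElem?_append_right (by omega), Nat.add_sub_cancel_left, add_comm 1,
      List.getElem?_cons_succ]
    simp
  have hd : (l₁ ++ a :: (l₂ ++ astar a :: l₃)).drop (l₁.length + 1) = l₂ ++ astar a :: l₃ := by
    rw [List.drop_length_add_append]; rfl
  have hd' : (l₁ ++ a :: (l₂ ++ astar a :: l₃)).drop (l₁.length + 1 + l₂.length + 1) = l₃ := by
    rw [show l₁.length + 1 + l₂.length + 1 = l₁.length + 1 + (l₂.length + 1) by omega,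
      ← List.drop_drop, hd, List.drop_length_add_append]
    rfl
  simp only [isPathFrom_append, pathTgt_append, IsPathFrom, pathTgt, asrc_astar, atgt_astar] at h
  obtain ⟨⟨h1, h2, h3, h4, h5⟩, h6⟩ := h
  have hin : IsPathFrom s t (atgt s t a) l₂ ∧ pathTgt s t (atgt s t a) l₂ = atgt s t a :=
    ⟨h3, h4.symm⟩
  have hout : IsPathFrom s t v (l₁ ++ l₃) ∧ pathTgt s t v (l₁ ++ l₃) = v := by
    rw [isPathFrom_append, pathTgt_append, ← h2]
    exact ⟨⟨h1, h5⟩, h6⟩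
  have hout' : IsPathFrom s t (asrc s t a) (l₃ ++ l₁) ∧
      pathTgt s t (asrc s t a) (l₃ ++ l₁) = asrc s t a := by
    rw [isPathFrom_append, pathTgt_append, h6]
    exact ⟨⟨h5, h1⟩, h2.symm⟩
  have hc : etaOr k s t (mkN k s t (asrc s t a) (l₃ ++ l₁)) = cutSum k s t v (l₁ ++ l₃) := by
    rw [etaOr_mkN k hout', cutSum_append_comm k _ _ hout, h2]
  rw [dorTerm, hi, hj]
  dsimp only
  rw [hd, hd', show l₁.length + 1 + l₂.length - l₁.length - 1 = l₂.length by omega,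
    List.take_left, List.take_left, atgt_astar, map_smul, map_sub, TensorProduct.map_tmul,
    TensorProduct.map_tmul, hc, etaOr_mkN k hin]

lemma dorTerm_eq_zero (v : I) {l : List (Arr E)} {i j : ℕ} (hij : i < j)
    (h : ¬ ∃ (a : Arr E) (l₁ l₂ l₃ : List (Arr E)), l = l₁ ++ a :: (l₂ ++ astar a :: l₃) ∧
      i = l₁.length ∧ j = l₁.length + 1 + l₂.length) :
    dorTerm k s t v l i j = 0 := by
  rw [dorTerm]
  split
  · rename_i a b ha hb
    rw [omg_eq_zero k, zero_smul]
    rintro rfl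
    refine h ⟨a, l.take i, (l.drop (i + 1)).take (j - (i + 1)), l.drop (j + 1), ?_, ?_, ?_⟩
    all_goals
      obtain ⟨hi, ha⟩ := List.getElem?_eq_some_iff.1 ha
      obtain ⟨hj, hb⟩ := List.getElem?_eq_some_iff.1 hb
    · have hdj : astar a :: l.drop (j + 1) = (l.drop (i + 1)).drop (j - (i + 1)) := by
        rw [List.drop_drop, show i + 1 + (j - (i + 1)) = j by omega, ← hb,
          List.getElem_cons_drop]
      rw [hdj, List.take_append_drop, ← ha, List.getElem_cons_drop, List.take_append_drop]
    · simp; omega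
    · simp; omega
  · exact zero_smul _ _

lemma map_etaOr_deltaOr (p : ClosedQPath s t) :
    ∑ i ∈ Finset.range p.path.arrows.length, ∑ j ∈ Finset.range p.path.arrows.length,
      (if i < j then TensorProduct.map (etaOr k s t) (etaOr k s t)
        (dorTerm k s t p.path.src p.path.arrows i j) else 0) =
    rhoOD k s t (cutSum k s t p.path.src p.path.arrows) := by
  obtain ⟨⟨v, l, hv⟩, hl⟩ := p
  dsimp only at hl ⊢
  rw [cutSum, map_sum]
  simp only [rhoOD_single_mk, NCForest.treeCobracket_tree]
  rw [NCForest.sum_parses_splits, NCForest.sum_markedParses]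
  refine Finset.sum_congr rfl fun i _ => Finset.sum_congr rfl fun j _ => ?_
  by_cases h : ∃ (a : Arr E) (l₁ l₂ l₃ : List (Arr E)), l = l₁ ++ a :: (l₂ ++ astar a :: l₃) ∧
      i = l₁.length ∧ j = l₁.length + 1 + l₂.length
  · obtain ⟨a, l₁, l₂, l₃, rfl, rfl, rfl⟩ := h
    rw [NCForest.sum_markedParses_fiber, if_pos (by omega), map_dorTerm k v a l₁ l₂ l₃ ⟨hv, hl⟩]
    exact (sum_edgeTerm k v (atgt s t a) a l₂ (l₁ ++ l₃)).symm
  · rw [NCForest.markedParses_fiber_eq_empty h, Finset.sum_empty]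
    split_ifs with hij
    · rw [dorTerm_eq_zero k v hij h, map_zero]
    · rfl

end Cobracket

/-- `η_or` is an injective homomorphism of Lie coalgebras
`(L, δ_or) → (T_or(Φ_or), ρ^ss_O)`. -/
theorem etaOr_injective_lie_hom :
    Function.Injective (etaOr k s t) ∧
    TensorProduct.map (etaOr k s t) (etaOr k s t) ∘ₗ deltaOr k s t =
      rhoOD k s t ∘ₗ etaOr k s t := by
  constructor
  · exact Function.LeftInverse.injective (g := vertexLabel k s t) fun x =>
      LinearMap.congr_fun (vertexLabel_comp_etaOr k) x
  · refine Finsupp.lhom_ext' fun q => LinearMap.ext_ring ?_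
    have hη : etaOr k s t (Finsupp.single q 1) =
        cutSum k s t q.out.path.src q.out.path.arrows := by
      conv_lhs => rw [← Quot.out_eq q]
      exact etaOr_single_mk k q.out
    refine Eq.trans ?_ ((map_etaOr_deltaOr k q.out).trans (congrArg (rhoOD k s t) hη.symm))
    refine (congrArg (TensorProduct.map (etaOr k s t) (etaOr k s t))
      (Finsupp.lift_single_one _ q)).trans ?_
    dsimp only
    simp only [map_sum]
    refine Finset.sum_congr rfl fun i _ => Finset.sum_congr rfl fun j _ => ?_
    split_ifs
    · rfl
    · rw [zero_smul, map_zero]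

end
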